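/- arXiv:2412.07932 — 3 statements merged into one kernel-verified Lean document; each statement's English description precedes it below -/
import Mathlib

section
/- Fix matrices P, Q, R ∈ SL(2,ℂ) with tr(P) ≠ 2 and tr(P) ≠ −2, let G be the group generated by {P, Q, R}, and suppose the natural action of G on ℂ² is irreducible. Then G is unitary if and only if the seven traces tr(P), tr(Q), tr(R), tr(P·Q), tr(Q·R), tr(P·R), tr(P·Q·R) are all real. -/
/-!
If `gᴴ H g = H` with `H` invertible, then `gᴴ` is conjugate to `g⁻¹`, and `tr g⁻¹ = tr g` in
`SL(2,ℂ)`, so every trace of a unitary group is real.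

Conversely, since `tr P ≠ ±2` there is a basis in which `P = diag(a, b)` with `ab = 1`, `a ≠ b`.
As `a + b` is real, conjugation either swaps `a` and `b` or fixes both. In both cases the pair of
conditions `x + y ∈ ℝ`, `a x + b y ∈ ℝ` determines how conjugation acts on `x` and `y`: it swaps
them, respectively fixes them (`conj_swap`, `conj_fix`). Applied to the diagonal entries of `Q`,
`R` and to the two mixed summands of `tr (QR)`, this turns the trace conditions into relations
between the off-diagonal entries. In the swapped case these relations yield an invariant form
`diag(x, y)` with `x`, `y` real (`exists_diagonal_scalars`), in the fixed case an invariant form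
with zero diagonal (`exists_antidiagonal_scalar`). Irreducibility enters only by excluding the two
coordinate lines as invariant lines.
-/

open Matrix Complex

/-- A subgroup of `SL(2,ℂ)`, viewed as a set of matrices, is *unitary* if it preserves some
nondegenerate Hermitian form `H` under `g ↦ gᴴ H g`. -/
def IsUnitarySubgroup (G : Subgroup (Matrix.SpecialLinearGroup (Fin 2) ℂ)) : Prop :=
  ∃ H : Matrix (Fin 2) (Fin 2) ℂ, H.IsHermitian ∧ H.det ≠ 0 ∧
    ∀ g ∈ G, (g : Matrix (Fin 2) (Fin 2) ℂ)ᴴ * H * (g : Matrix (Fin 2) (Fin 2) ℂ) = H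

/-- The natural action of `G ⊆ SL(2,ℂ)` on `ℂ²` is irreducible if there is no nonzero common
eigenvector. -/
def IsIrreducibleSubgroup (G : Subgroup (Matrix.SpecialLinearGroup (Fin 2) ℂ)) : Prop :=
  ¬ ∃ v : Fin 2 → ℂ, v ≠ 0 ∧ ∀ g ∈ G, ∃ c : ℂ, (g : Matrix (Fin 2) (Fin 2) ℂ) *ᵥ v = c • v

/-- The trace of an element of `SL(2,ℂ)`. -/
noncomputable def trSL (g : Matrix.SpecialLinearGroup (Fin 2) ℂ) : ℂ :=
  Matrix.trace (g : Matrix (Fin 2) (Fin 2) ℂ)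

open scoped ComplexConjugate

/-! ### Scalar relations forced by real traces -/

lemma real_iff {z : ℂ} : z.im = 0 ↔ conj z = z := Complex.conj_eq_iff_im.symm

lemma conj_swap {a b x y : ℂ} (hab : a ≠ b) (ha : conj a = b) (hb : conj b = a)
    (h1 : conj (x + y) = x + y) (h2 : conj (a * x + b * y) = a * x + b * y) :
    conj x = y ∧ conj y = x := by
  simp only [map_add, map_mul, ha, hb] at h1 h2
  have hab' := sub_ne_zero.mpr hab
  constructor
  · apply mul_left_cancel₀ hab'
    linear_combination a * h1 - h2
  · apply mul_left_cancel₀ hab'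
    linear_combination h2 - b * h1

lemma conj_fix {a b x y : ℂ} (hab : a ≠ b) (ha : conj a = a) (hb : conj b = b)
    (h1 : conj (x + y) = x + y) (h2 : conj (a * x + b * y) = a * x + b * y) :
    conj x = x ∧ conj y = y := by
  simp only [map_add, map_mul, ha, hb] at h1 h2
  have hab' := sub_ne_zero.mpr hab
  constructor
  · apply mul_left_cancel₀ hab'
    linear_combination h2 - b * h1
  · apply mul_left_cancel₀ hab'
    linear_combination a * h1 - h2

/-- Here `(b, c)` and `(e, f)` are the off-diagonal entries of `Q` and of `R`, and the conclusion
says that `diag(x, y)` is invariant once the diagonals of `Q` and `R` are swapped by conjugation. -/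
lemma exists_diagonal_scalars {b c e f : ℂ} (hbc : conj (b * c) = b * c)
    (hef : conj (e * f) = e * f) (hm : conj (b * f) = c * e)
    (h1 : ¬ (b = 0 ∧ e = 0)) (h2 : ¬ (c = 0 ∧ f = 0)) :
    ∃ x y : ℂ, conj x = x ∧ conj y = y ∧ x ≠ 0 ∧ y ≠ 0 ∧
      y * conj c = -x * b ∧ y * conj f = -x * e := by
  -- The vanishing patterns allowed by `hm` and irreducibility leave one pair entirely nonzero.
  by_cases h : b ≠ 0 ∧ c ≠ 0
  · obtain ⟨hb, hc⟩ := h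
    refine ⟨-(c * conj c), b * c, by simp [mul_comm], hbc, by simp [hc], by simp [hb, hc], by ring,
      ?_⟩
    simp only [map_mul] at hm hbc
    linear_combination conj c * hm - conj f * hbc
  · have hm' : b * f = conj c * conj e := by
      have := congrArg conj hm
      simpa using this
    have hef0 : e ≠ 0 ∧ f ≠ 0 := by
      by_cases hb : b = 0
      · have he : e ≠ 0 := fun he => h1 ⟨hb, he⟩
        have hc : c = 0 := by simpa [hb, he] using hm
        exact ⟨he, fun hf => h2 ⟨hc, hf⟩⟩
      · have hc : c = 0 := by
          by_contra hc
          exact h ⟨hb, hc⟩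
        have hf : f ≠ 0 := fun hf => h2 ⟨hc, hf⟩
        simp [hc, hb, hf] at hm'
    obtain ⟨he, hf⟩ := hef0
    refine ⟨-(f * conj f), e * f, by simp [mul_comm], hef, by simp [hf], by simp [he, hf], ?_,
      by ring⟩
    simp only [map_mul] at hef
    linear_combination -conj f * hm' - conj c * hef

/-- Here `(b, c)` and `(e, f)` are the off-diagonal entries of `Q` and of `R`, and the conclusion
says that `!![0, i w; -i w̄, 0]` is invariant once the diagonals of `Q` and `R` are real. -/
lemma exists_antidiagonal_scalar {b c e f : ℂ} (hbc : conj (b * c) = b * c)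
    (hef : conj (e * f) = e * f) (hbf : conj (b * f) = b * f) (hce : conj (c * e) = c * e)
    (h1 : ¬ (b = 0 ∧ e = 0)) (h2 : ¬ (c = 0 ∧ f = 0)) :
    ∃ w : ℂ, w ≠ 0 ∧ conj w * conj c = w * c ∧ conj w * conj f = w * f ∧
      w * conj b = conj w * b ∧ w * conj e = conj w * e := by
  simp only [map_mul] at hbc hef hbf hce
  by_cases hb : b = 0
  · refine ⟨e, fun he => h1 ⟨hb, he⟩, by linear_combination hce, hef, by simp [hb], by ring⟩
  · refine ⟨b, hb, hbc, hbf, by ring, ?_⟩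
    by_cases hc : c = 0
    · have hf : f ≠ 0 := fun hf => h2 ⟨hc, hf⟩
      apply mul_left_cancel₀ (mul_ne_zero hf ((map_ne_zero (starRingEnd ℂ)).mpr hf))
      linear_combination b * f * hef - e * f * hbf
    · apply mul_left_cancel₀ (mul_ne_zero hc ((map_ne_zero (starRingEnd ℂ)).mpr hc))
      linear_combination b * c * hce - c * e * hbc

/-! ### The invariant form when `P` is diagonal -/

/-- The existence of an invariant form in a basis diagonalizing `P`. -/
lemma exists_form_of_diagonal {a b : ℂ} (hab : a * b = 1) (hne : a ≠ b)
    (Q R : Matrix (Fin 2) (Fin 2) ℂ)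
    (hQ : Q.det = 1) (hR : R.det = 1)
    (h12 : ¬ (Q 0 1 = 0 ∧ R 0 1 = 0)) (h21 : ¬ (Q 1 0 = 0 ∧ R 1 0 = 0))
    (tP : (!![a, 0; 0, b]).trace.im = 0) (tQ : Q.trace.im = 0) (tR : R.trace.im = 0)
    (tPQ : (!![a, 0; 0, b] * Q).trace.im = 0) (tQR : (Q * R).trace.im = 0)
    (tPR : (!![a, 0; 0, b] * R).trace.im = 0) (tPQR : (!![a, 0; 0, b] * Q * R).trace.im = 0) :
    ∃ H : Matrix (Fin 2) (Fin 2) ℂ, H.IsHermitian ∧ H.det ≠ 0 ∧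
      (!![a, 0; 0, b])ᴴ * H * !![a, 0; 0, b] = H ∧ Qᴴ * H * Q = H ∧ Rᴴ * H * R = H := by
  rw [real_iff] at tP tQ tR tPQ tQR tPR tPQR
  simp only [Matrix.trace_fin_two, Matrix.mul_apply, Fin.sum_univ_two, Matrix.of_apply,
    Matrix.cons_val', Matrix.cons_val_zero, Matrix.cons_val_one, Matrix.cons_val_fin_one,
    zero_mul, zero_add, add_zero] at tP tQ tR tPQ tQR tPR tPQR
  rw [Matrix.det_fin_two] at hQ hR
  generalize hq11 : Q 0 0 = q11 at *
  generalize hq12 : Q 0 1 = q12 at *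
  generalize hq21 : Q 1 0 = q21 at *
  generalize hq22 : Q 1 1 = q22 at *
  generalize hr11 : R 0 0 = r11 at *
  generalize hr12 : R 0 1 = r12 at *
  generalize hr21 : R 1 0 = r21 at *
  generalize hr22 : R 1 1 = r22 at *
  have eQ : Q = !![q11, q12; q21, q22] := by
    rw [Matrix.eta_fin_two Q, hq11, hq12, hq21, hq22]
  have eR : R = !![r11, r12; r21, r22] := by
    rw [Matrix.eta_fin_two R, hr11, hr12, hr21, hr22]
  subst eQ eR
  have hab' : conj a * conj b = 1 := by rw [← map_mul, hab, map_one]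
  have hq : q12 * q21 = q11 * q22 - 1 := by linear_combination -hQ
  have hr : r12 * r21 = r11 * r22 - 1 := by linear_combination -hR
  -- `conj a` is a root of the characteristic polynomial of `P`.
  have hroot : (conj a - a) * (conj a - b) = 0 := by
    rw [map_add] at tP
    linear_combination hab - hab' + conj a * tP
  rcases mul_eq_zero.mp hroot with ha | ha
  · have ha := sub_eq_zero.mp ha
    have hb : conj b = b := by
      rw [map_add] at tP; linear_combination tP - ha
    obtain ⟨c11, c22⟩ := conj_fix hne ha hb tQ tPQ
    obtain ⟨d11, d22⟩ := conj_fix hne ha hb tR tPR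
    obtain ⟨m1, m2⟩ := conj_fix (x := q12 * r21) (y := q21 * r12) hne ha hb
      (by simp only [map_add, map_mul, c11, c22, d11, d22] at tQR ⊢; linear_combination tQR)
      (by simp only [map_add, map_mul, c11, c22, d11, d22, ha, hb] at tPQR ⊢
          linear_combination tPQR)
    obtain ⟨w, hw, w1, w2, w3, w4⟩ := exists_antidiagonal_scalar
      (by rw [hq]; simp [c11, c22]) (by rw [hr]; simp [d11, d22]) m1 m2 h12 h21
    refine ⟨!![0, I * w; -I * conj w, 0], ?_, ?_, ?_, ?_, ?_⟩
    · ext i j; fin_cases i <;> fin_cases j <;> simp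
    · simp [Matrix.det_fin_two, hw]
    · ext i j; fin_cases i <;> fin_cases j <;>
        simp [Matrix.mul_apply, Fin.sum_univ_two, ha, hb]
      · linear_combination I * w * hab
      · linear_combination I * conj w * hab
    · ext i j; fin_cases i <;> fin_cases j <;>
        simp [Matrix.mul_apply, Fin.sum_univ_two, c11, c22]
      · linear_combination -I * q11 * w1
      · linear_combination I * w * hQ - I * q12 * w1
      · linear_combination I * q21 * w3 - I * conj w * hQ
      · linear_combination I * q22 * w3
    · ext i j; fin_cases i <;> fin_cases j <;>
        simp [Matrix.mul_apply, Fin.sum_univ_two, d11, d22]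
      · linear_combination -I * r11 * w2
      · linear_combination I * w * hR - I * r12 * w2
      · linear_combination I * r21 * w4 - I * conj w * hR
      · linear_combination I * r22 * w4
  · have ha := sub_eq_zero.mp ha
    have hb : conj b = a := by rw [← ha]; simp
    obtain ⟨c11, c22⟩ := conj_swap hne ha hb tQ tPQ
    obtain ⟨d11, d22⟩ := conj_swap hne ha hb tR tPR
    obtain ⟨m1, m2⟩ := conj_swap (x := q12 * r21) (y := q21 * r12) hne ha hb
      (by simp only [map_add, map_mul, c11, c22, d11, d22] at tQR ⊢; linear_combination tQR)
      (by simp only [map_add, map_mul, c11, c22, d11, d22, ha, hb] at tPQR ⊢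
          linear_combination tPQR)
    obtain ⟨x, y, hx, hy, hx0, hy0, h1, h2⟩ := exists_diagonal_scalars
      (by rw [hq]; simp [c11, c22, mul_comm]) (by rw [hr]; simp [d11, d22, mul_comm]) m1 h12 h21
    have h1' : y * q21 = -x * conj q12 := by simpa [hx, hy] using congrArg conj h1
    have h2' : y * r21 = -x * conj r12 := by simpa [hx, hy] using congrArg conj h2
    refine ⟨!![x, 0; 0, y], ?_, ?_, ?_, ?_, ?_⟩
    · ext i j; fin_cases i <;> fin_cases j <;> simp [hx, hy]
    · simp [Matrix.det_fin_two, hx0, hy0]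
    · ext i j; fin_cases i <;> fin_cases j <;>
        simp [Matrix.mul_apply, Fin.sum_univ_two, ha, hb]
      · linear_combination x * hab
      · linear_combination y * hab
    · ext i j; fin_cases i <;> fin_cases j <;>
        simp [Matrix.mul_apply, Fin.sum_univ_two, c11, c22]
      · linear_combination q21 * h1 + x * hQ
      · linear_combination q22 * h1
      · linear_combination q11 * h1'
      · linear_combination y * hQ + q12 * h1'
    · ext i j; fin_cases i <;> fin_cases j <;>
        simp [Matrix.mul_apply, Fin.sum_univ_two, d11, d22]
      · linear_combination r21 * h2 + x * hR
      · linear_combination r22 * h2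
      · linear_combination r11 * h2'
      · linear_combination y * hR + r12 * h2'

/-! ### Diagonalizing `P` -/

/-- A matrix of determinant one with trace different from `±2` is diagonalizable. -/
lemma exists_diagonalization (P : Matrix (Fin 2) (Fin 2) ℂ) (hdet : P.det = 1)
    (h2 : P.trace ≠ 2) (hm2 : P.trace ≠ -2) :
    ∃ (a b : ℂ) (S : Matrix (Fin 2) (Fin 2) ℂ), a * b = 1 ∧ a ≠ b ∧ IsUnit S.det ∧
      P * S = S * !![a, 0; 0, b] := by
  obtain ⟨a, ha⟩ : ∃ a : ℂ, 1 * (a * a) + (-P.trace) * a + 1 = 0 := by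
    obtain ⟨s, hs⟩ := IsAlgClosed.exists_eq_mul_self (discrim 1 (-P.trace) 1)
    exact exists_quadratic_eq_zero one_ne_zero ⟨s, hs⟩
  have hab : a * (P.trace - a) = 1 := by linear_combination -ha
  have hne : a ≠ P.trace - a := by
    intro h
    have : (P.trace - 2) * (P.trace + 2) = 0 := by
      linear_combination 4 * hab + (-P.trace + 2 * a) * h
    rcases mul_eq_zero.mp this with h | h
    · exact h2 (sub_eq_zero.mp h)
    · exact hm2 (eq_neg_of_add_eq_zero_left h)
  -- Both `a` and `tr P - a` are eigenvalues of `P`.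
  have eig : ∀ c : ℂ, c * (P.trace - c) = 1 → ∃ v : Fin 2 → ℂ, v ≠ 0 ∧ P *ᵥ v = c • v := by
    intro c hc
    have hd : (P - c • (1 : Matrix (Fin 2) (Fin 2) ℂ)).det = 0 := by
      rw [Matrix.det_fin_two] at hdet ⊢
      rw [Matrix.trace_fin_two] at hc
      simp
      linear_combination hdet - hc
    obtain ⟨v, hv, hv'⟩ := Matrix.exists_mulVec_eq_zero_iff.mpr hd
    refine ⟨v, hv, ?_⟩
    rwa [Matrix.sub_mulVec, Matrix.smul_mulVec, Matrix.one_mulVec, sub_eq_zero] at hv'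
  obtain ⟨v, hv, hPv⟩ := eig a hab
  obtain ⟨w, hw, hPw⟩ := eig (P.trace - a) (by linear_combination hab)
  generalize P.trace - a = b at *
  refine ⟨a, b, !![v 0, w 0; v 1, w 1], hab, hne, ?_, ?_⟩
  · rw [isUnit_iff_ne_zero, Matrix.det_fin_two_of]
    intro h
    have v0 := congrFun hPv 0
    have v1 := congrFun hPv 1
    have w0 := congrFun hPw 0
    have w1 := congrFun hPw 1
    simp [Matrix.mulVec, dotProduct, Fin.sum_univ_two] at v0 v1 w0 w1
    -- Proportional eigenvectors would force `a = b`.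
    have key : ∀ i j, v i * w j = 0 := by
      have hs := sub_ne_zero.mpr hne
      intro i j
      apply mul_left_cancel₀ hs
      fin_cases i <;> fin_cases j <;> simp only [Fin.zero_eta, Fin.mk_one, mul_zero]
      · linear_combination -w 0 * v0 + v 0 * w0 - P 0 1 * h
      · linear_combination -w 1 * v0 + v 1 * w0 + (P 0 0 - b) * h
      · linear_combination -w 0 * v1 + v 0 * w1 + (b - P 1 1) * h
      · linear_combination -w 1 * v1 + v 1 * w1 + P 1 0 * h
    obtain ⟨i, hi⟩ := Function.ne_iff.mp hv
    obtain ⟨j, hj⟩ := Function.ne_iff.mp hw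
    exact mul_ne_zero hi hj (key i j)
  · have v0 := congrFun hPv 0
    have v1 := congrFun hPv 1
    have w0 := congrFun hPw 0
    have w1 := congrFun hPw 1
    simp [Matrix.mulVec, dotProduct, Fin.sum_univ_two] at v0 v1 w0 w1
    ext i j; fin_cases i <;> fin_cases j <;> simp [Matrix.mul_apply, Fin.sum_univ_two]
    · linear_combination v0
    · linear_combination w0
    · linear_combination v1
    · linear_combination w1

/-! ### Traces of unitary elements -/

lemma trace_im_eq_zero_of_unitary {H : Matrix (Fin 2) (Fin 2) ℂ} (hH : H.det ≠ 0)
    (g : Matrix.SpecialLinearGroup (Fin 2) ℂ)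
    (h : (g : Matrix (Fin 2) (Fin 2) ℂ)ᴴ * H * (g : Matrix (Fin 2) (Fin 2) ℂ) = H) :
    (trSL g).im = 0 := by
  have hu : IsUnit H.det := isUnit_iff_ne_zero.mpr hH
  have hadj : (g : Matrix (Fin 2) (Fin 2) ℂ) * (g : Matrix (Fin 2) (Fin 2) ℂ).adjugate = 1 := by
    rw [Matrix.mul_adjugate, g.det_coe, one_smul]
  have h1 : (g : Matrix (Fin 2) (Fin 2) ℂ)ᴴ
      = H * (g : Matrix (Fin 2) (Fin 2) ℂ).adjugate * H⁻¹ := by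
    conv_rhs => rw [← h]
    rw [Matrix.mul_assoc _ _ (Matrix.adjugate _), hadj, Matrix.mul_one, h,
      Matrix.mul_assoc, Matrix.mul_nonsing_inv _ hu, Matrix.mul_one]
  have h2 := congrArg Matrix.trace h1
  rw [Matrix.trace_mul_comm, ← Matrix.mul_assoc, Matrix.nonsing_inv_mul _ hu, Matrix.one_mul,
    Matrix.trace_conjTranspose, Matrix.adjugate_fin_two] at h2
  rw [real_iff, trSL, ← starRingEnd_apply] at *
  rw [h2]
  simp [Matrix.trace_fin_two, add_comm]

/-! ### From generators to the group -/

/-- A common eigenvector of the generators is a common eigenvector of the group. -/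
lemma eigenvector_of_mem_closure {s : Set (Matrix.SpecialLinearGroup (Fin 2) ℂ)}
    {v : Fin 2 → ℂ} (hv : v ≠ 0)
    (h : ∀ g ∈ s, ∃ c : ℂ, (g : Matrix (Fin 2) (Fin 2) ℂ) *ᵥ v = c • v)
    (g : Matrix.SpecialLinearGroup (Fin 2) ℂ) (hg : g ∈ Subgroup.closure s) :
    ∃ c : ℂ, (g : Matrix (Fin 2) (Fin 2) ℂ) *ᵥ v = c • v := by
  induction hg using Subgroup.closure_induction with
  | mem x hx => exact h x hx
  | one => exact ⟨1, by simp⟩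
  | mul x y _ _ hx hy =>
    obtain ⟨c, hc⟩ := hx
    obtain ⟨d, hd⟩ := hy
    refine ⟨d * c, ?_⟩
    rw [Matrix.SpecialLinearGroup.coe_mul, ← Matrix.mulVec_mulVec, hd, Matrix.mulVec_smul, hc,
      smul_smul]
  | inv x _ hx =>
    obtain ⟨c, hc⟩ := hx
    have e : ((x⁻¹ : Matrix.SpecialLinearGroup (Fin 2) ℂ) : Matrix (Fin 2) (Fin 2) ℂ) *ᵥ
        ((x : Matrix (Fin 2) (Fin 2) ℂ) *ᵥ v) = v := by
      rw [Matrix.mulVec_mulVec, ← Matrix.SpecialLinearGroup.coe_mul, inv_mul_cancel]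
      simp
    rw [hc, Matrix.mulVec_smul] at e
    have hc0 : c ≠ 0 := by
      rintro rfl
      exact hv (by simpa using e.symm)
    refine ⟨c⁻¹, ?_⟩
    nth_rewrite 2 [← e]
    rw [smul_smul, inv_mul_cancel₀ hc0, one_smul]

lemma form_invariant_of_mem_closure {s : Set (Matrix.SpecialLinearGroup (Fin 2) ℂ)}
    {H : Matrix (Fin 2) (Fin 2) ℂ}
    (h : ∀ g ∈ s, (g : Matrix (Fin 2) (Fin 2) ℂ)ᴴ * H * (g : Matrix (Fin 2) (Fin 2) ℂ) = H)
    (g : Matrix.SpecialLinearGroup (Fin 2) ℂ) (hg : g ∈ Subgroup.closure s) :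
    (g : Matrix (Fin 2) (Fin 2) ℂ)ᴴ * H * (g : Matrix (Fin 2) (Fin 2) ℂ) = H := by
  induction hg using Subgroup.closure_induction with
  | mem x hx => exact h x hx
  | one => simp
  | mul x y _ _ hx hy =>
    rw [Matrix.SpecialLinearGroup.coe_mul, Matrix.conjTranspose_mul]
    calc _ = (y : Matrix (Fin 2) (Fin 2) ℂ)ᴴ *
          ((x : Matrix (Fin 2) (Fin 2) ℂ)ᴴ * H * (x : Matrix (Fin 2) (Fin 2) ℂ)) *
          (y : Matrix (Fin 2) (Fin 2) ℂ) := by simp only [Matrix.mul_assoc]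
      _ = H := by rw [hx, hy]
  | inv x _ hx =>
    have e : (x : Matrix (Fin 2) (Fin 2) ℂ) *
        ((x⁻¹ : Matrix.SpecialLinearGroup (Fin 2) ℂ) : Matrix (Fin 2) (Fin 2) ℂ) = 1 := by
      rw [← Matrix.SpecialLinearGroup.coe_mul, mul_inv_cancel]
      simp
    generalize ((x⁻¹ : Matrix.SpecialLinearGroup (Fin 2) ℂ) : Matrix (Fin 2) (Fin 2) ℂ) = y at *
    have e' : yᴴ * (x : Matrix (Fin 2) (Fin 2) ℂ)ᴴ = 1 := by
      rw [← Matrix.conjTranspose_mul, e, Matrix.conjTranspose_one]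
    calc yᴴ * H * y = yᴴ * ((x : Matrix (Fin 2) (Fin 2) ℂ)ᴴ * H * x) * y := by rw [hx]
      _ = (yᴴ * (x : Matrix (Fin 2) (Fin 2) ℂ)ᴴ) * H * (x * y) := by
        simp only [Matrix.mul_assoc]
      _ = H := by rw [e, e', Matrix.one_mul, Matrix.mul_one]

/-! ### Change of basis -/

/-- Transport of an invariant form back along the change of basis `S`, with `T = S⁻¹`. -/
lemma form_conj {S T M H : Matrix (Fin 2) (Fin 2) ℂ} (hST : S * T = 1)
    (h : (T * M * S)ᴴ * H * (T * M * S) = H) : Mᴴ * (Tᴴ * H * T) * M = Tᴴ * H * T := by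
  have hST' : Tᴴ * Sᴴ = 1 := by rw [← Matrix.conjTranspose_mul, hST, Matrix.conjTranspose_one]
  simp only [Matrix.conjTranspose_mul] at h
  calc Mᴴ * (Tᴴ * H * T) * M
      = (Tᴴ * Sᴴ) * (Mᴴ * (Tᴴ * H * T) * M) * (S * T) := by
        rw [hST, hST', Matrix.one_mul, Matrix.mul_one]
    _ = Tᴴ * (Sᴴ * (Mᴴ * Tᴴ) * H * (T * M * S)) * T := by simp only [Matrix.mul_assoc]
    _ = Tᴴ * H * T := by rw [h]

/-- If column `j` of `S⁻¹ M S` vanishes off the diagonal, column `j` of `S` is an eigenvector. -/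
lemma eigenvector_of_conj {S T M : Matrix (Fin 2) (Fin 2) ℂ} (hST : S * T = 1) (i j : Fin 2)
    (hij : i ≠ j) (h : (T * M * S) i j = 0) :
    ∃ c : ℂ, M *ᵥ (S *ᵥ Pi.single j 1) = c • (S *ᵥ Pi.single j 1) := by
  refine ⟨(T * M * S) j j, ?_⟩
  have e : (T * M * S) *ᵥ Pi.single j 1 = (T * M * S) j j • Pi.single j (1 : ℂ) := by
    rw [Matrix.mulVec_single_one]
    ext k
    by_cases hk : k = j
    · subst hk; simp
    · have : k = i := by omega
      subst this
      simp [h, hk]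
  calc M *ᵥ (S *ᵥ Pi.single j 1) = S *ᵥ ((T * M * S) *ᵥ Pi.single j 1) := by
        simp only [Matrix.mulVec_mulVec, ← Matrix.mul_assoc, hST, Matrix.one_mul]
    _ = _ := by rw [e, Matrix.mulVec_smul]

/-! ### The equivalence -/

/-- For an irreducible group generated by three elements of `SL(2,ℂ)`, the first of which has
trace `≠ ±2`, unitarity is equivalent to the seven Fricke traces being real. -/
theorem unitary_iff_real_traces_of_trace_ne_two
    (P Q R : Matrix.SpecialLinearGroup (Fin 2) ℂ)
    (hP2 : trSL P ≠ 2) (hPm2 : trSL P ≠ -2)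
    (G : Subgroup (Matrix.SpecialLinearGroup (Fin 2) ℂ))
    (hG : G = Subgroup.closure {P, Q, R})
    (hirr : IsIrreducibleSubgroup G) :
    IsUnitarySubgroup G ↔
      ((trSL P).im = 0 ∧ (trSL Q).im = 0 ∧ (trSL R).im = 0 ∧
       (trSL (P * Q)).im = 0 ∧ (trSL (Q * R)).im = 0 ∧ (trSL (P * R)).im = 0 ∧
       (trSL (P * Q * R)).im = 0) := by
  constructor
  · rintro ⟨H, _, hdet, hinv⟩
    have hP : P ∈ G := hG ▸ Subgroup.subset_closure (by simp)
    have hQ : Q ∈ G := hG ▸ Subgroup.subset_closure (by simp)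
    have hR : R ∈ G := hG ▸ Subgroup.subset_closure (by simp)
    have key : ∀ g ∈ G, (trSL g).im = 0 := fun g hg =>
      trace_im_eq_zero_of_unitary hdet g (hinv g hg)
    exact ⟨key _ hP, key _ hQ, key _ hR, key _ (mul_mem hP hQ), key _ (mul_mem hQ hR),
      key _ (mul_mem hP hR), key _ (mul_mem (mul_mem hP hQ) hR)⟩
  · rintro ⟨tP, tQ, tR, tPQ, tQR, tPR, tPQR⟩
    simp only [trSL, Matrix.SpecialLinearGroup.coe_mul] at *
    obtain ⟨a, b, S, hab, hne, hS, hPS⟩ := exists_diagonalization P P.det_coe hP2 hPm2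
    obtain ⟨T, hST⟩ : ∃ T, S * T = 1 := ⟨S⁻¹, Matrix.mul_nonsing_inv _ hS⟩
    have hTS : T * S = 1 := mul_eq_one_comm.mp hST
    have hdiag : T * (P : Matrix (Fin 2) (Fin 2) ℂ) * S = !![a, 0; 0, b] := by
      rw [Matrix.mul_assoc, hPS, ← Matrix.mul_assoc, hTS, Matrix.one_mul]
    have hTdet : T.det * S.det = 1 := by rw [← Matrix.det_mul, hTS, Matrix.det_one]
    have hdet : ∀ M : Matrix (Fin 2) (Fin 2) ℂ, M.det = 1 → (T * M * S).det = 1 := by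
      intro M hM
      rw [Matrix.det_mul, Matrix.det_mul, hM, mul_one, hTdet]
    have hmul : ∀ M N : Matrix (Fin 2) (Fin 2) ℂ, (T * M * S) * (T * N * S) = T * (M * N) * S := by
      intro M N
      calc _ = T * M * (S * T) * N * S := by simp only [Matrix.mul_assoc]
        _ = _ := by rw [hST, Matrix.mul_one]; simp only [Matrix.mul_assoc]
    have htr : ∀ M : Matrix (Fin 2) (Fin 2) ℂ, (T * M * S).trace = M.trace := by
      intro M
      rw [Matrix.trace_mul_comm, ← Matrix.mul_assoc, hST, Matrix.one_mul]
    -- A coordinate line preserved by `Q` and `R` would be preserved by `G`.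
    have hoff : ∀ i j : Fin 2, i ≠ j → ¬ ((T * (Q : Matrix (Fin 2) (Fin 2) ℂ) * S) i j = 0 ∧
        (T * (R : Matrix (Fin 2) (Fin 2) ℂ) * S) i j = 0) := by
      rintro i j hij ⟨h1, h2⟩
      have h0 : (T * (P : Matrix (Fin 2) (Fin 2) ℂ) * S) i j = 0 := by
        rw [hdiag]
        fin_cases i <;> fin_cases j <;> simp at hij ⊢
      have hv : S *ᵥ Pi.single j 1 ≠ 0 := by
        intro h
        have := congrArg (T *ᵥ ·) h
        simp only [Matrix.mulVec_mulVec, hTS, Matrix.one_mulVec, Matrix.mulVec_zero] at this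
        simpa using congrFun this j
      refine hirr ⟨_, hv, fun g hg => eigenvector_of_mem_closure hv ?_ g (hG ▸ hg)⟩
      rintro g (rfl | rfl | rfl)
      exacts [eigenvector_of_conj hST i j hij h0, eigenvector_of_conj hST i j hij h1,
        eigenvector_of_conj hST i j hij h2]
    obtain ⟨H, hH, hHdet, fP, fQ, fR⟩ := exists_form_of_diagonal hab hne
      (T * (Q : Matrix (Fin 2) (Fin 2) ℂ) * S) (T * (R : Matrix (Fin 2) (Fin 2) ℂ) * S)
      (hdet _ Q.det_coe) (hdet _ R.det_coe) (hoff 0 1 (by decide)) (hoff 1 0 (by decide))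
      (by rwa [← hdiag, htr]) (by rwa [htr]) (by rwa [htr]) (by rwa [← hdiag, hmul, htr])
      (by rwa [hmul, htr]) (by rwa [← hdiag, hmul, htr]) (by rwa [← hdiag, hmul, hmul, htr])
    rw [← hdiag] at fP
    refine ⟨Tᴴ * H * T, Matrix.isHermitian_conjTranspose_mul_mul _ hH, ?_, ?_⟩
    · have hT0 : T.det ≠ 0 := left_ne_zero_of_mul_eq_one hTdet
      simp [Matrix.det_mul, Matrix.det_conjTranspose, hT0, hHdet]
    · intro g hg
      refine form_invariant_of_mem_closure ?_ g (hG ▸ hg)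
      rintro g (rfl | rfl | rfl)
      exacts [form_conj hST fP, form_conj hST fQ, form_conj hST fR]
end

section
/- Let G be an abelian subgroup of SL(2,ℂ) containing at least one element that is not a scalar multiple of the identity. Then G is unitary if and only if there exists an invertible 2×2 complex matrix T such that T⁻¹ G T is contained in one of the following three groups: (a) SO(2,ℝ), the 2×2 real orthogonal matrices of determinant 1; (b) the group of real diagonal 2×2 matrices of determinant 1; (c) the group of real upper-triangular 2×2 matrices of determinant 1 and trace equal to 2 or −2 (i.e., matrices ±U with U real upper-triangular unipotent). -/
/-!
Real matrices `M` of determinant 1 satisfy `Mᴴ J M = det M • J = J` for the symplectic matrix `J`,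
so they preserve the nondegenerate Hermitian matrix `i J` (`real_det_one_preserves`). All three model
groups consist of such matrices, and transporting `i J` along `T` gives the form preserved by `G`.

Conversely, let `A ∈ G` be non-scalar. It has a cyclic vector, from which `exists_jordan` builds a
Jordan basis `P`. As `G` is abelian, the matrices `M = P⁻¹ g P` commute with the Jordan form of `A`,
and they preserve the nondegenerate form `K = Pᴴ H P`.

* If the eigenvalues of `A` differ, all `M` are diagonal. If `K 0 1 ≠ 0`, invariance of that
  entry makes `M` real (`diag_real`), model (b). If `K 0 1 = 0`, then `K 0 0 ≠ 0` forces the entries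
  of `M` to be `z` and `conj z` with `|z| = 1` (`diag_circle`), and one change of basis
  over `ℂ` turns all `M` into real rotations, model (a).
* If `A` has a Jordan block, `M = !![a, b; 0, a]` with `a = ±1`. Invariance of `K` under the block
  itself gives `K 0 0 = 0` and `K 1 0 = - K 0 1 ≠ 0`, and then invariance under `M` makes `b` real
  (`unip_real`), model (c).
-/

open Matrix Complex

lemma conj_eq_of_mul_eq {T g N : Matrix (Fin 2) (Fin 2) ℂ} (hT : IsUnit T.det)
    (h : g * T = T * N) : T⁻¹ * g * T = N := by
  rw [Matrix.mul_assoc, h, ← Matrix.mul_assoc, Matrix.nonsing_inv_mul _ hT, Matrix.one_mul]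

lemma real_det_one_preserves {M : Matrix (Fin 2) (Fin 2) ℂ} (hr : ∀ i j, (M i j).im = 0)
    (hd : M.det = 1) : Mᴴ * !![0, I; -I, 0] * M = !![0, I; -I, 0] := by
  have hc : ∀ i j, (starRingEnd ℂ) (M i j) = M i j := fun i j => conj_eq_iff_im.2 (hr i j)
  rw [Matrix.det_fin_two] at hd
  ext i j
  fin_cases i <;> fin_cases j <;> simp [Matrix.mul_apply, Fin.sum_univ_two, hc]
  · ring
  · linear_combination I * hd
  · linear_combination -I * hd
  · ring

/-- If `T⁻¹ g T` is real of determinant 1 for all `g ∈ G`, then `G` preserves the form `i J`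
transported along `T`. -/
lemma unitary_of_conj_real (G : Subgroup (Matrix.SpecialLinearGroup (Fin 2) ℂ))
    (T : Matrix (Fin 2) (Fin 2) ℂ) (hT : IsUnit T.det)
    (h : ∀ g ∈ G, (∀ i j, ((T⁻¹ * (g : Matrix (Fin 2) (Fin 2) ℂ) * T) i j).im = 0) ∧
      (T⁻¹ * (g : Matrix (Fin 2) (Fin 2) ℂ) * T).det = 1) : IsUnitarySubgroup G := by
  have hT' : IsUnit (T⁻¹).det := by
    rw [Matrix.det_nonsing_inv]; exact hT.ringInverse
  refine ⟨(T⁻¹)ᴴ * !![0, I; -I, 0] * T⁻¹, ?_, ?_, ?_⟩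
  · apply Matrix.isHermitian_conjTranspose_mul_mul
    ext i j
    fin_cases i <;> fin_cases j <;> simp
  · rw [Matrix.det_mul, Matrix.det_mul, Matrix.det_conjTranspose]
    refine mul_ne_zero (mul_ne_zero (star_ne_zero.2 hT'.ne_zero) ?_) hT'.ne_zero
    simp [Matrix.det_fin_two]
  · intro g hg
    obtain ⟨hr, hd⟩ := h g hg
    set M := T⁻¹ * (g : Matrix (Fin 2) (Fin 2) ℂ) * T with hM
    have e : T⁻¹ * (g : Matrix (Fin 2) (Fin 2) ℂ) = M * T⁻¹ := by
      rw [hM, Matrix.mul_assoc _ T, Matrix.mul_nonsing_inv _ hT, Matrix.mul_one]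
    calc _ = (T⁻¹ * (g : Matrix (Fin 2) (Fin 2) ℂ))ᴴ * !![0, I; -I, 0] *
          (T⁻¹ * (g : Matrix (Fin 2) (Fin 2) ℂ)) := by
          simp only [Matrix.conjTranspose_mul, Matrix.mul_assoc]
      _ = (T⁻¹)ᴴ * (Mᴴ * !![0, I; -I, 0] * M) * T⁻¹ := by
          rw [e]; simp only [Matrix.conjTranspose_mul, Matrix.mul_assoc]
      _ = _ := by rw [real_det_one_preserves hr hd]

/-- A non-scalar matrix has a cyclic vector `(x, y)`: the expression is the determinant of the
matrix with columns `v` and `A v`. -/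
lemma exists_cyclic (A : Matrix (Fin 2) (Fin 2) ℂ)
    (hA : ∀ c : ℂ, A ≠ c • (1 : Matrix (Fin 2) (Fin 2) ℂ)) :
    ∃ x y : ℂ, x * (A 1 0 * x + A 1 1 * y) - y * (A 0 0 * x + A 0 1 * y) ≠ 0 := by
  by_contra! h
  have h1 := h 1 0
  have h2 := h 0 1
  have h3 := h 1 1
  simp at h1 h2 h3
  apply hA (A 0 0)
  ext i j
  fin_cases i <;> fin_cases j <;> simp [h1, h2]
  linear_combination h3 - h1 + h2

/-- Jordan form of a non-scalar matrix of determinant 1. With `v` cyclic and `l`, `m` the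
eigenvalues, the basis is `(A - m) v, (A - l) v` if `l ≠ m`, and `(A - l) v, v` if `l = m`. -/
lemma exists_jordan (A : Matrix (Fin 2) (Fin 2) ℂ) (hd : A.det = 1)
    (hA : ∀ c : ℂ, A ≠ c • (1 : Matrix (Fin 2) (Fin 2) ℂ)) :
    ∃ P : Matrix (Fin 2) (Fin 2) ℂ, IsUnit P.det ∧
      ((∃ l m : ℂ, l ≠ m ∧ A * P = P * !![l, 0; 0, m]) ∨
       (∃ l : ℂ, l ^ 2 = 1 ∧ A * P = P * !![l, 1; 0, l])) := by
  obtain ⟨x, y, hxy⟩ := exists_cyclic A hA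
  rw [Matrix.det_fin_two] at hd
  obtain ⟨s, hs⟩ := IsAlgClosed.exists_pow_nat_eq ((A 0 0 + A 1 1) ^ 2 - 4) (n := 2) two_pos
  obtain ⟨l, m, hsum, hprod⟩ : ∃ l m : ℂ, l + m = A 0 0 + A 1 1 ∧ l * m = 1 :=
    ⟨(A 0 0 + A 1 1 + s) / 2, (A 0 0 + A 1 1 - s) / 2, by ring, by linear_combination -hs / 4⟩
  clear hs
  by_cases hlm : l = m
  · subst hlm
    refine ⟨!![A 0 0 * x + A 0 1 * y - l * x, x; A 1 0 * x + A 1 1 * y - l * y, y], ?_,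
      Or.inr ⟨l, by linear_combination hprod, ?_⟩⟩
    · rw [isUnit_iff_ne_zero, Matrix.det_fin_two]
      simp
      intro h
      apply hxy
      linear_combination -h
    · ext i j
      fin_cases i <;> fin_cases j <;> simp [Matrix.mul_apply, Fin.sum_univ_two]
      · linear_combination (-(A 0 0 * x + A 0 1 * y)) * hsum + x * hprod - x * hd
      · ring
      · linear_combination (-(A 1 0 * x + A 1 1 * y)) * hsum + y * hprod - y * hd
      · ring
  · refine ⟨!![A 0 0 * x + A 0 1 * y - m * x, A 0 0 * x + A 0 1 * y - l * x;
      A 1 0 * x + A 1 1 * y - m * y, A 1 0 * x + A 1 1 * y - l * y], ?_,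
      Or.inl ⟨l, m, hlm, ?_⟩⟩
    · rw [isUnit_iff_ne_zero, Matrix.det_fin_two]
      simp
      intro h
      apply mul_ne_zero hxy (sub_ne_zero.2 hlm)
      linear_combination h
    · ext i j
      fin_cases i <;> fin_cases j <;> simp [Matrix.mul_apply, Fin.sum_univ_two]
      · linear_combination (-(A 0 0 * x + A 0 1 * y)) * hsum + x * hprod - x * hd
      · linear_combination (-(A 0 0 * x + A 0 1 * y)) * hsum + x * hprod - x * hd
      · linear_combination (-(A 1 0 * x + A 1 1 * y)) * hsum + y * hprod - y * hd
      · linear_combination (-(A 1 0 * x + A 1 1 * y)) * hsum + y * hprod - y * hd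

lemma diag_of_commute {M : Matrix (Fin 2) (Fin 2) ℂ} {l m : ℂ} (hlm : l ≠ m)
    (h : M * !![l, 0; 0, m] = !![l, 0; 0, m] * M) : M 0 1 = 0 ∧ M 1 0 = 0 := by
  have h1 := congrFun (congrFun h 0) 1
  have h2 := congrFun (congrFun h 1) 0
  simp [Matrix.mul_apply, Fin.sum_univ_two] at h1 h2
  constructor
  · apply mul_left_cancel₀ (sub_ne_zero.2 hlm); linear_combination -h1
  · apply mul_left_cancel₀ (sub_ne_zero.2 hlm); linear_combination h2

lemma unip_of_commute {M : Matrix (Fin 2) (Fin 2) ℂ} {l : ℂ}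
    (h : M * !![l, 1; 0, l] = !![l, 1; 0, l] * M) : M 1 0 = 0 ∧ M 1 1 = M 0 0 := by
  have h1 := congrFun (congrFun h 0) 0
  have h2 := congrFun (congrFun h 0) 1
  simp [Matrix.mul_apply, Fin.sum_univ_two] at h1 h2
  constructor
  · linear_combination -h1
  · linear_combination -h2

/-- Invariance of the entry `K 0 1` reads `conj (M 0 0) * M 1 1 = 1`, and `det M = 1` reads
`M 0 0 * M 1 1 = 1`. -/
lemma diag_real {M K : Matrix (Fin 2) (Fin 2) ℂ} (hM : M 0 1 = 0 ∧ M 1 0 = 0) (hd : M.det = 1)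
    (hK : Mᴴ * K * M = K) (h01 : K 0 1 ≠ 0) : ∀ i j, (M i j).im = 0 := by
  obtain ⟨ha, hb⟩ := hM
  have h1 := congrFun (congrFun hK 0) 1
  simp [Matrix.mul_apply, Fin.sum_univ_two, ha, hb] at h1
  simp [Matrix.det_fin_two, ha] at hd
  have hz : (starRingEnd ℂ) (M 0 0) * M 1 1 = 1 := by
    apply mul_left_cancel₀ h01; linear_combination h1
  have hne : M 1 1 ≠ 0 := right_ne_zero_of_mul (hd ▸ one_ne_zero)
  have e0 : (starRingEnd ℂ) (M 0 0) = M 0 0 := by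
    apply mul_right_cancel₀ hne; rw [hz, hd]
  have e1 : (starRingEnd ℂ) (M 1 1) = M 1 1 := by
    have := congrArg (starRingEnd ℂ) hd
    rw [map_mul, map_one, e0] at this
    exact mul_left_cancel₀ (left_ne_zero_of_mul (hd ▸ one_ne_zero)) (this.trans hd.symm)
  intro i j
  fin_cases i <;> fin_cases j <;> simp [ha, hb]
  · exact conj_eq_iff_im.1 e0
  · exact conj_eq_iff_im.1 e1

/-- Invariance of the entry `K 0 0` reads `|M 0 0| ^ 2 = 1`. -/
lemma diag_circle {M K : Matrix (Fin 2) (Fin 2) ℂ} (hM : M 0 1 = 0 ∧ M 1 0 = 0) (hd : M.det = 1)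
    (hK : Mᴴ * K * M = K) (h00 : K 0 0 ≠ 0) :
    M = !![M 0 0, 0; 0, (starRingEnd ℂ) (M 0 0)] ∧ (M 0 0).re ^ 2 + (M 0 0).im ^ 2 = 1 := by
  obtain ⟨ha, hb⟩ := hM
  have h1 := congrFun (congrFun hK 0) 0
  simp [Matrix.mul_apply, Fin.sum_univ_two, hb] at h1
  simp [Matrix.det_fin_two, ha] at hd
  have hz : M 0 0 * (starRingEnd ℂ) (M 0 0) = 1 := by
    apply mul_left_cancel₀ h00; linear_combination h1
  constructor
  · have e : M 1 1 = (starRingEnd ℂ) (M 0 0) :=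
      mul_left_cancel₀ (left_ne_zero_of_mul (hd ▸ one_ne_zero)) (hd.trans hz.symm)
    ext i j
    fin_cases i <;> fin_cases j <;> simp [ha, hb, e]
  · rw [Complex.mul_conj, normSq_apply] at hz
    have : (M 0 0).re * (M 0 0).re + (M 0 0).im * (M 0 0).im = 1 := by exact_mod_cast hz
    linarith

/-- A nondegenerate form preserved by a Jordan block vanishes on the eigenvector and is
antisymmetric off the diagonal. -/
lemma form_of_block {K : Matrix (Fin 2) (Fin 2) ℂ} {l : ℂ} (hl : l ^ 2 = 1) (hKd : K.det ≠ 0)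
    (hK : !![l, 1; 0, l]ᴴ * K * !![l, 1; 0, l] = K) :
    K 0 0 = 0 ∧ K 1 0 = - K 0 1 ∧ K 0 1 ≠ 0 := by
  have hc : l = 1 ∨ l = -1 := mul_self_eq_one_iff.1 (by rw [← sq, hl])
  have h1 := congrFun (congrFun hK 0) 1
  have h2 := congrFun (congrFun hK 1) 1
  simp [Matrix.mul_apply, Fin.sum_univ_two] at h1 h2
  have h00 : K 0 0 = 0 := by
    rcases hc with rfl | rfl <;> simp at h1 <;> exact h1
  have h10 : K 1 0 = - K 0 1 := by
    rcases hc with rfl | rfl <;> simp [h00] at h2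
    · linear_combination h2
    · linear_combination -h2
  refine ⟨h00, h10, fun h => hKd ?_⟩
  simp [Matrix.det_fin_two, h00, h]

lemma unip_real {M K : Matrix (Fin 2) (Fin 2) ℂ} (hM : M 1 0 = 0 ∧ M 1 1 = M 0 0)
    (hd : M.det = 1) (hK : Mᴴ * K * M = K) (h00 : K 0 0 = 0) (h10 : K 1 0 = - K 0 1)
    (h01 : K 0 1 ≠ 0) : (∀ i j, (M i j).im = 0) ∧ (M.trace = 2 ∨ M.trace = -2) := by
  obtain ⟨ha, hb⟩ := hM
  have h1 := congrFun (congrFun hK 1) 1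
  simp [Matrix.det_fin_two, ha, hb] at hd
  have hc : M 0 0 = 1 ∨ M 0 0 = -1 := mul_self_eq_one_iff.1 hd
  simp [Matrix.mul_apply, Fin.sum_univ_two, h00, h10, hb] at h1
  have e : (starRingEnd ℂ) (M 0 1) = M 0 1 := by
    apply mul_left_cancel₀ h01
    rcases hc with h | h <;> simp [h] at h1
    · linear_combination h1
    · linear_combination -h1
  constructor
  · intro i j
    fin_cases i <;> fin_cases j <;> simp [ha, hb]
    · rcases hc with h | h <;> simp [h]
    · exact conj_eq_iff_im.1 e
    · rcases hc with h | h <;> simp [h]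
  · rw [Matrix.trace_fin_two, hb]
    rcases hc with h | h <;> norm_num [h]

/-- An abelian subgroup of `SL(2,ℂ)` containing a non-scalar element is unitary iff it is
conjugate to a subgroup of `SO(2,ℝ)`, of the real diagonal matrices of determinant 1, or of
the real upper-triangular matrices of determinant 1 and trace `±2`. -/
theorem abelian_unitary_iff_conj_model
    (G : Subgroup (Matrix.SpecialLinearGroup (Fin 2) ℂ))
    (hab : ∀ a ∈ G, ∀ b ∈ G, a * b = b * a)
    (hns : ∃ g ∈ G, ∀ c : ℂ, (g : Matrix (Fin 2) (Fin 2) ℂ) ≠ c • (1 : Matrix (Fin 2) (Fin 2) ℂ)) :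
    IsUnitarySubgroup G ↔
      ∃ T : Matrix (Fin 2) (Fin 2) ℂ, IsUnit T.det ∧
        ((∀ g ∈ G,
            (∀ i j, ((T⁻¹ * (g : Matrix (Fin 2) (Fin 2) ℂ) * T) i j).im = 0) ∧
            (T⁻¹ * (g : Matrix (Fin 2) (Fin 2) ℂ) * T)ᵀ *
              (T⁻¹ * (g : Matrix (Fin 2) (Fin 2) ℂ) * T) = 1 ∧
            (T⁻¹ * (g : Matrix (Fin 2) (Fin 2) ℂ) * T).det = 1) ∨
         (∀ g ∈ G,
            (∀ i j, ((T⁻¹ * (g : Matrix (Fin 2) (Fin 2) ℂ) * T) i j).im = 0) ∧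
            (T⁻¹ * (g : Matrix (Fin 2) (Fin 2) ℂ) * T) 0 1 = 0 ∧
            (T⁻¹ * (g : Matrix (Fin 2) (Fin 2) ℂ) * T) 1 0 = 0 ∧
            (T⁻¹ * (g : Matrix (Fin 2) (Fin 2) ℂ) * T).det = 1) ∨
         (∀ g ∈ G,
            (∀ i j, ((T⁻¹ * (g : Matrix (Fin 2) (Fin 2) ℂ) * T) i j).im = 0) ∧
            (T⁻¹ * (g : Matrix (Fin 2) (Fin 2) ℂ) * T) 1 0 = 0 ∧
            (T⁻¹ * (g : Matrix (Fin 2) (Fin 2) ℂ) * T).det = 1 ∧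
            (Matrix.trace (T⁻¹ * (g : Matrix (Fin 2) (Fin 2) ℂ) * T) = 2 ∨
             Matrix.trace (T⁻¹ * (g : Matrix (Fin 2) (Fin 2) ℂ) * T) = -2))) := by
  constructor
  · rintro ⟨H, -, hHd, hinv⟩
    obtain ⟨A, hAG, hA⟩ := hns
    obtain ⟨P, hP, hJ⟩ := exists_jordan A A.det_coe hA
    have hKd : (Pᴴ * H * P).det ≠ 0 := by
      rw [Matrix.det_mul, Matrix.det_mul, Matrix.det_conjTranspose]
      simp [hHd, hP.ne_zero]
    set K := Pᴴ * H * P with hKdef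
    have hdet : ∀ {S : Matrix (Fin 2) (Fin 2) ℂ} (g : Matrix.SpecialLinearGroup (Fin 2) ℂ),
        IsUnit S.det → (S⁻¹ * (g : Matrix (Fin 2) (Fin 2) ℂ) * S).det = 1 := by
      intro S g hS
      rw [Matrix.det_conj' ((Matrix.isUnit_iff_isUnit_det S).2 hS), g.det_coe]
    have hM : ∀ g ∈ G, (P⁻¹ * (g : Matrix (Fin 2) (Fin 2) ℂ) * P)ᴴ * K *
        (P⁻¹ * (g : Matrix (Fin 2) (Fin 2) ℂ) * P) = K := by
      intro g hg
      set M := P⁻¹ * (g : Matrix (Fin 2) (Fin 2) ℂ) * P with hMdef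
      have e : P * M = (g : Matrix (Fin 2) (Fin 2) ℂ) * P := by
        rw [hMdef, ← Matrix.mul_assoc, ← Matrix.mul_assoc, Matrix.mul_nonsing_inv _ hP,
          Matrix.one_mul]
      calc _ = (P * M)ᴴ * H * (P * M) := by
            simp only [hKdef, Matrix.conjTranspose_mul, Matrix.mul_assoc]
        _ = Pᴴ * ((g : Matrix (Fin 2) (Fin 2) ℂ)ᴴ * H * (g : Matrix (Fin 2) (Fin 2) ℂ)) * P := by
            rw [e]; simp only [Matrix.conjTranspose_mul, Matrix.mul_assoc]
        _ = K := by rw [hinv g hg]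
    have hcomm : ∀ {J : Matrix (Fin 2) (Fin 2) ℂ},
        (A : Matrix (Fin 2) (Fin 2) ℂ) * P = P * J → ∀ g ∈ G,
        (P⁻¹ * (g : Matrix (Fin 2) (Fin 2) ℂ) * P) * J =
          J * (P⁻¹ * (g : Matrix (Fin 2) (Fin 2) ℂ) * P) := by
      intro J hJ g hg
      have hgA : (g : Matrix (Fin 2) (Fin 2) ℂ) * (A : Matrix (Fin 2) (Fin 2) ℂ) =
          (A : Matrix (Fin 2) (Fin 2) ℂ) * (g : Matrix (Fin 2) (Fin 2) ℂ) := by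
        rw [← Matrix.SpecialLinearGroup.coe_mul, hab g hg A hAG, Matrix.SpecialLinearGroup.coe_mul]
      have hPP := Matrix.mul_nonsing_inv P hP
      have conj_mul : ∀ X Y : Matrix (Fin 2) (Fin 2) ℂ,
          (P⁻¹ * X * P) * (P⁻¹ * Y * P) = P⁻¹ * (X * Y) * P := by
        intro X Y
        calc _ = P⁻¹ * X * (P * P⁻¹) * Y * P := by simp only [Matrix.mul_assoc]
          _ = _ := by rw [hPP, Matrix.mul_one]; simp only [Matrix.mul_assoc]
      rw [← conj_eq_of_mul_eq hP hJ, conj_mul, conj_mul, hgA]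
    rcases hJ with ⟨l, m, hlm, hJ⟩ | ⟨l, hl, hJ⟩
    · by_cases h01 : K 0 1 = 0
      · have h00 : K 0 0 ≠ 0 := by
          intro h
          apply hKd
          simp [Matrix.det_fin_two, h, h01]
        -- The columns `(1, 1)` and `(i, -i)` conjugate `diag(z, conj z)` to a rotation.
        have hT : IsUnit (P * !![1, I; 1, -I]).det := by
          rw [Matrix.det_mul]
          refine hP.mul (isUnit_iff_ne_zero.2 ?_)
          rw [Matrix.det_fin_two]
          intro h
          apply I_ne_zero
          simp at h
          linear_combination -h / 2
        refine ⟨P * !![1, I; 1, -I], hT, Or.inl fun g hg => ?_⟩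
        obtain ⟨e, hz⟩ := diag_circle (diag_of_commute hlm (hcomm hJ g hg)) (hdet g hP)
          (hM g hg) h00
        have hd := hdet g hT
        set z := (P⁻¹ * (g : Matrix (Fin 2) (Fin 2) ℂ) * P) 0 0
        have hgP : (g : Matrix (Fin 2) (Fin 2) ℂ) * P =
            P * !![z, 0; 0, (starRingEnd ℂ) z] := by
          rw [← e, ← Matrix.mul_assoc, ← Matrix.mul_assoc, Matrix.mul_nonsing_inv _ hP,
            Matrix.one_mul]
        have hrot : !![z, 0; 0, (starRingEnd ℂ) z] * !![1, I; 1, -I] =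
            !![1, I; 1, -I] * !![(z.re : ℂ), -(z.im : ℂ); (z.im : ℂ), (z.re : ℂ)] := by
          ext i j
          fin_cases i <;> fin_cases j <;> apply Complex.ext <;>
            simp [Matrix.mul_apply, Fin.sum_univ_two]
        have hN := conj_eq_of_mul_eq hT (g := g)
          (N := !![(z.re : ℂ), -(z.im : ℂ); (z.im : ℂ), (z.re : ℂ)]) (by
            rw [← Matrix.mul_assoc, hgP, Matrix.mul_assoc, hrot, Matrix.mul_assoc])
        refine ⟨?_, ?_, hd⟩
        · rw [hN]
          intro i j
          fin_cases i <;> fin_cases j <;> simp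
        · rw [hN]
          have hz' : (z.re : ℂ) ^ 2 + (z.im : ℂ) ^ 2 = 1 := by exact_mod_cast hz
          ext i j
          fin_cases i <;> fin_cases j <;> simp [Matrix.mul_apply, Fin.sum_univ_two]
          · linear_combination hz'
          · ring
          · ring
          · linear_combination hz'
      · refine ⟨P, hP, Or.inr (Or.inl fun g hg => ?_)⟩
        have hdg := diag_of_commute hlm (hcomm hJ g hg)
        exact ⟨diag_real hdg (hdet g hP) (hM g hg) h01, hdg.1, hdg.2, hdet g hP⟩
    · have hKA := hM A hAG
      rw [conj_eq_of_mul_eq hP hJ] at hKA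
      obtain ⟨h00, h10, h01⟩ := form_of_block hl hKd hKA
      refine ⟨P, hP, Or.inr (Or.inr fun g hg => ?_)⟩
      have hu := unip_of_commute (hcomm hJ g hg)
      obtain ⟨hr, ht⟩ := unip_real hu (hdet g hP) (hM g hg) h00 h10 h01
      exact ⟨hr, hu.1, hdet g hP, ht⟩
  · rintro ⟨T, hT, h | h | h⟩
    · exact unitary_of_conj_real G T hT fun g hg => ⟨(h g hg).1, (h g hg).2.2⟩
    · exact unitary_of_conj_real G T hT fun g hg => ⟨(h g hg).1, (h g hg).2.2.2⟩
    · exact unitary_of_conj_real G T hT fun g hg => ⟨(h g hg).1, (h g hg).2.2.1⟩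
end

section
/- Let G be a subgroup of SL(2,ℂ) whose natural action on ℂ² is irreducible, and let S ⊆ G be a set generating G as a group. Then G is unitary if and only if for all P, Q, R ∈ S the traces tr(P), tr(Q), tr(R), tr(P·Q), tr(P·R), tr(Q·R) are all real and at least one of tr(P·Q·R), tr(P·R·Q) is real. -/
/-! The proof rests on two facts about 2×2 matrices.

*Traces.* Polarising Cayley–Hamilton, `x y + y x` is a combination of `x`, `y`, `1` with coefficients
polynomial in traces. Applied to the pairs `(y, z)`, `(x, z)` and `(z, x y)`, this expresses `2 x y z`
through products of at most two factors (`two_mul_mul_mul`), with coefficients polynomial in the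
traces of products of at most three factors. Under the trace conditions the real span of `1`, `x`,
`x y` (`x, y ∈ S`) is therefore stable under left multiplication by `S` and `S⁻¹`, so it contains
`G`, and all elements of `G` have real trace (`trace_real_of_conditions`). The disjunction costs
nothing since `tr (PQR) + tr (PRQ)` is a polynomial in the other traces.

*Forms.* Irreducibility forces `G` to span all matrices (`span_eq_top`, Burnside's theorem in
dimension two). As the trace form is nondegenerate and `G` has real traces, there is a linear map `φ`
on matrices with `φ (g x) = (g⁻¹)ᴴ φ x` for `g ∈ G` (`exists_twisted_map`). Restricting `φ` to
matrices supported in one column, and keeping one column of the result, yields a nonzero `N` with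
`gᴴ N g = N`. Then `N + Nᴴ` is Hermitian and invariant, and so is `i N` if `N + Nᴴ = 0`. This gives a
nonzero invariant Hermitian matrix; its kernel is `G`-stable, so by irreducibility it is nondegenerate.

Conversely, `gᴴ H g = H` makes `gᴴ` conjugate to `g⁻¹`, whose trace is that of `g`; hence every
element of a unitary group has real trace. -/

open Matrix Complex

local notation "M₂" => Matrix (Fin 2) (Fin 2) ℂ
local notation "SL₂" => Matrix.SpecialLinearGroup (Fin 2) ℂ

/-! ### Elements of `SL(2,ℂ)` as matrices, and trace identities -/

lemma SL_coe_mul (g h : SL₂) : ((g * h : SL₂) : M₂) = (g : M₂) * (h : M₂) := rfl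

lemma SL_coe_one : ((1 : SL₂) : M₂) = 1 := rfl

lemma SL_coe_inv (g : SL₂) : ((g⁻¹ : SL₂) : M₂) = adjugate (g : M₂) := rfl

/-- The fundamental trace identity. -/
lemma trace_mul_mul_add (x y z : M₂) :
    trace (x * y * z) + trace (x * z * y) =
      trace x * trace (y * z) + trace y * trace (x * z) + trace z * trace (x * y)
        - trace x * trace y * trace z := by
  simp only [trace_fin_two, mul_apply, Fin.sum_univ_two]
  ring

/-- Triple products are combinations of shorter ones, with coefficients polynomial in traces. -/
lemma two_mul_mul_mul (x y z : M₂) :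
    (2 : ℂ) • (x * (y * z)) =
      trace x • (y * z) + trace y • (x * z) + trace z • (x * y)
      + (trace (y * z) - trace y * trace z) • x
      + (- trace (x * z)) • y
      + (trace (x * y) - trace x * trace y) • z
      + (trace (x * y * z) - trace x * trace (y * z) - trace z * trace (x * y)
          + trace x * trace y * trace z) • (1 : M₂) := by
  ext i j
  fin_cases i <;> fin_cases j <;>
    simp [trace_fin_two, mul_apply, Fin.sum_univ_two] <;> ring

/-- For elements of `SL(2,ℂ)` the inverse is the trace times the identity minus the element. -/
lemma coe_inv_eq (g : SL₂) :
    ((g⁻¹ : SL₂) : M₂) = trSL g • (1 : M₂) - (g : M₂) := by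
  rw [SL_coe_inv, trSL]
  ext i j
  fin_cases i <;> fin_cases j <;> simp [adjugate_fin_two, trace_fin_two]

lemma trSL_inv (g : SL₂) : trSL g⁻¹ = trSL g := by
  unfold trSL
  rw [SL_coe_inv, adjugate_fin_two]
  simp [trace_fin_two, add_comm]

lemma coe_mul_inv (g : SL₂) : (g : M₂) * ((g⁻¹ : SL₂) : M₂) = 1 := by
  rw [← SL_coe_mul, mul_inv_cancel, SL_coe_one]

lemma coe_inv_mul (g : SL₂) : ((g⁻¹ : SL₂) : M₂) * (g : M₂) = 1 := by
  rw [← SL_coe_mul, inv_mul_cancel, SL_coe_one]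

/-! ### Reality of all traces -/

/-- If the traces of products of at most three elements of `S` are real, so are those of all
elements of the generated group. -/
lemma trace_real_of_conditions (S : Set SL₂)
    (h1 : ∀ P ∈ S, (trSL P).im = 0) (h2 : ∀ P ∈ S, ∀ Q ∈ S, (trSL (P * Q)).im = 0)
    (h3 : ∀ P ∈ S, ∀ Q ∈ S, ∀ R ∈ S, (trSL (P * Q * R)).im = 0)
    (g : SL₂) (hg : g ∈ Subgroup.closure S) : (trSL g).im = 0 := by
  let T : Set M₂ := {m | m = 1 ∨ (∃ P ∈ S, m = P) ∨ ∃ P ∈ S, ∃ Q ∈ S, m = P * Q}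
  let B : Submodule ℝ M₂ := Submodule.span ℝ T
  have one_mem : (1 : M₂) ∈ B := Submodule.subset_span (Or.inl rfl)
  have mem1 : ∀ P ∈ S, (P : M₂) ∈ B := fun P hP =>
    Submodule.subset_span (Or.inr (Or.inl ⟨P, hP, rfl⟩))
  have mem2 : ∀ P ∈ S, ∀ Q ∈ S, (P : M₂) * (Q : M₂) ∈ B := fun P hP Q hQ =>
    Submodule.subset_span (Or.inr (Or.inr ⟨P, hP, Q, hQ, rfl⟩))
  have smul_mem : ∀ (c : ℂ) (m : M₂), c.im = 0 → m ∈ B → c • m ∈ B := by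
    intro c m hc hm
    have : c • m = c.re • m := by
      ext i j
      have : c = (c.re : ℂ) := Complex.ext rfl (by simpa using hc)
      rw [this]; simp
    rw [this]
    exact B.smul_mem _ hm
  have trB : ∀ m ∈ B, (trace m).im = 0 := by
    intro m hm
    induction hm using Submodule.span_induction with
    | mem m hm =>
      rcases hm with rfl | ⟨P, hP, rfl⟩ | ⟨P, hP, Q, hQ, rfl⟩
      · simp
      · exact h1 P hP
      · simpa [trSL] using h2 P hP Q hQ
    | zero => simp
    | add x y _ _ hx hy => simp [trace_add, hx, hy]
    | smul a x _ hx => simp [trace_smul, hx]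
  have mulB : ∀ P ∈ S, ∀ m ∈ B, (P : M₂) * m ∈ B := by
    intro P hP m hm
    induction hm using Submodule.span_induction with
    | mem m hm =>
      rcases hm with rfl | ⟨Q, hQ, rfl⟩ | ⟨Q, hQ, R, hR, rfl⟩
      · simpa using mem1 P hP
      · exact mem2 P hP Q hQ
      · have e := two_mul_mul_mul (P : M₂) Q R
        have a1 := h1 P hP
        have a2 := h1 Q hQ
        have a3 := h1 R hR
        have a4 := h2 P hP Q hQ
        have a5 := h2 P hP R hR
        have a6 := h2 Q hQ R hR
        have a7 := h3 P hP Q hQ R hR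
        simp only [trSL, SL_coe_mul] at a1 a2 a3 a4 a5 a6 a7
        have h : (2 : ℂ) • ((P : M₂) * ((Q : M₂) * (R : M₂))) ∈ B := by
          rw [e]
          refine B.add_mem (B.add_mem (B.add_mem (B.add_mem (B.add_mem (B.add_mem ?_ ?_) ?_)
            ?_) ?_) ?_) ?_ <;> apply smul_mem
          all_goals first
            | exact one_mem
            | exact mem1 _ ‹_›
            | exact mem2 _ ‹_› _ ‹_›
            | simp [Complex.mul_im, Complex.mul_re, a1, a2, a3, a4, a5, a6, a7]
        have h' := smul_mem (2⁻¹ : ℂ) _ (by simp) h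
        rwa [smul_smul, inv_mul_cancel₀ two_ne_zero, one_smul] at h'
    | zero => simp
    | add x y _ _ hx hy => rw [mul_add]; exact B.add_mem hx hy
    | smul a x _ hx => rw [mul_smul_comm]; exact B.smul_mem _ hx
  have gB : (g : M₂) ∈ B := by
    induction hg using Subgroup.closure_induction_left with
    | one => simpa using one_mem
    | mul_left x hx y hy ih => simpa using mulB x hx _ ih
    | inv_mul_cancel x hx y hy ih =>
      rw [SL_coe_mul, coe_inv_eq, sub_mul, smul_mul_assoc, one_mul]
      exact B.sub_mem (smul_mem _ _ (h1 x hx) ih) (mulB x hx _ ih)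
  exact trB _ gB

/-! ### Irreducible groups span all matrices -/

/-- The kernel of a nonzero 2×2 matrix is at most a line. -/
lemma exists_smul_of_mulVec_eq_zero (m : M₂) (hm : m ≠ 0) (v w : Fin 2 → ℂ) (hv : v ≠ 0)
    (hmv : m *ᵥ v = 0) (hmw : m *ᵥ w = 0) : ∃ c : ℂ, w = c • v := by
  by_contra! hc
  apply hm
  -- `v` and `w` span the plane, and `m` kills both.
  have hD : v 0 * w 1 - v 1 * w 0 ≠ 0 := by
    intro hD
    by_cases h0 : v 0 = 0
    · have h1 : v 1 ≠ 0 := fun h1 => hv (by ext i; fin_cases i <;> simp [h0, h1])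
      refine hc (w 1 / v 1) ?_
      ext i
      fin_cases i
      · have : v 1 * w 0 = 0 := by linear_combination -hD + w 1 * h0
        simp [h0, (mul_eq_zero.mp this).resolve_left h1]
      · simp [h1]
    · refine hc (w 0 / v 0) ?_
      ext i
      fin_cases i
      · simp [h0]
      · simp only [Pi.smul_apply, smul_eq_mul, Fin.mk_one]
        field_simp
        linear_combination hD
  ext i j
  have e1 := congrFun hmv i
  have e2 := congrFun hmw i
  simp only [mulVec, dotProduct, Fin.sum_univ_two, Pi.zero_apply] at e1 e2
  apply mul_left_cancel₀ hD
  fin_cases j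
  · simp only [Fin.zero_eta, Matrix.zero_apply]
    linear_combination w 1 * e1 - v 1 * e2
  · simp only [Fin.mk_one, Matrix.zero_apply]
    linear_combination v 0 * e2 - w 0 * e1

/-- A matrix trace-orthogonal to an irreducible group is zero. -/
lemma eq_zero_of_trace_mul (G : Subgroup SL₂) (hirr : IsIrreducibleSubgroup G) (m : M₂)
    (hm : ∀ g ∈ G, trace (m * (g : M₂)) = 0) : m = 0 := by
  -- A singular nonzero `m` satisfies `m g m = tr (m g) m = 0`, so `m` kills `g v` for all `g`
  -- whenever `v` is in its image; then `v` is a common eigenvector.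
  have sing : ∀ m : M₂, m.det = 0 → (∀ g ∈ G, trace (m * (g : M₂)) = 0) → m = 0 := by
    intro m hd hm
    by_contra hne
    have hu : ∃ u, m *ᵥ u ≠ 0 := by
      by_contra! h
      exact hne (Matrix.ext fun i j => by simpa using congrFun (h (Pi.single j 1)) i)
    obtain ⟨u, hu⟩ := hu
    have key : ∀ g ∈ G, m *ᵥ ((g : M₂) *ᵥ (m *ᵥ u)) = 0 := by
      intro g hg
      have id1 : m * (g : M₂) * m = trace (m * (g : M₂)) • m - m.det • adjugate (g : M₂) := by
        ext i j
        fin_cases i <;> fin_cases j <;>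
          simp [trace_fin_two, mul_apply, Fin.sum_univ_two, det_fin_two, adjugate_fin_two] <;> ring
      rw [hm g hg, hd, zero_smul, zero_smul, sub_zero] at id1
      rw [mulVec_mulVec, mulVec_mulVec, id1, zero_mulVec]
    exact hirr ⟨m *ᵥ u, hu, fun g hg => exists_smul_of_mulVec_eq_zero m hne _ _ hu
      (by simpa using key 1 G.one_mem) (key g hg)⟩
  by_cases hd : m.det = 0
  · exact sing m hd hm
  -- For invertible `m` and an eigenvalue `l` of `g ∈ G`, the matrix `m (g - l)` is singular and
  -- trace-orthogonal to `G`, so `g = l`; thus every element of `G` is a scalar.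
  exfalso
  refine hirr ⟨![1, 0], fun h => by simpa using congrFun h 0, fun g hg => ?_⟩
  obtain ⟨l, hl⟩ := Module.End.exists_eigenvalue (Matrix.toLin' (g : M₂))
  obtain ⟨v, hv⟩ := hl.exists_hasEigenvector
  have hgv : (g : M₂) *ᵥ v = l • v := by simpa using hv.apply_eq_smul
  have hdet : ((g : M₂) - l • 1).det = 0 := by
    apply Matrix.exists_mulVec_eq_zero_iff.mp
    exact ⟨v, hv.2, by rw [sub_mulVec, smul_mulVec, one_mulVec, hgv, sub_self]⟩
  have h0 := sing (m * ((g : M₂) - l • 1)) (by rw [det_mul, hdet, mul_zero]) (by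
    intro h hh
    have e1 := hm (g * h) (G.mul_mem hg hh)
    have e2 := hm h hh
    rw [SL_coe_mul, ← mul_assoc] at e1
    rw [mul_sub, sub_mul, trace_sub, e1]
    simp [e2])
  have h1 : (g : M₂) - l • 1 = 0 := by
    have hu : IsUnit m.det := isUnit_iff_ne_zero.mpr hd
    calc (g : M₂) - l • 1 = m⁻¹ * m * ((g : M₂) - l • 1) := by
          rw [nonsing_inv_mul _ hu, one_mul]
      _ = 0 := by rw [mul_assoc, h0, mul_zero]
  exact ⟨l, by rw [sub_eq_zero.mp h1, smul_mulVec, one_mulVec]⟩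

/-- Burnside's theorem in dimension two: an irreducible group spans all matrices. -/
lemma span_eq_top (G : Subgroup SL₂) (hirr : IsIrreducibleSubgroup G) :
    Submodule.span ℂ {m : M₂ | ∃ g ∈ G, m = g} = ⊤ := by
  by_contra hne
  obtain ⟨f, hf0, hf⟩ := Submodule.exists_le_ker_of_lt_top _ (lt_top_iff_ne_top.mpr hne)
  -- Every linear functional on matrices is of the form `x ↦ tr (m x)`.
  let m : M₂ := Matrix.of fun i j => f (Matrix.single j i 1)
  have hm : ∀ x, f x = trace (m * x) := by
    intro x
    conv_lhs => rw [Matrix.matrix_eq_sum_single x]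
    have : ∀ i j (c : ℂ), f (Matrix.single i j c) = c * m j i := by
      intro i j c
      change _ = c * f (Matrix.single i j 1)
      rw [← smul_eq_mul, ← map_smul, Matrix.smul_single, smul_eq_mul, mul_one]
    simp only [Fin.sum_univ_two, map_add, this, trace_fin_two, mul_apply]
    ring
  have h0 : m = 0 := eq_zero_of_trace_mul G hirr m fun g hg => by
    rw [← hm]; exact hf (Submodule.subset_span ⟨g, hg, rfl⟩)
  exact hf0 (LinearMap.ext fun x => by rw [hm, h0]; simp)

/-! ### The invariant Hermitian form -/

/-- `φ` is the linear map sending each `g ∈ G` to `(g⁻¹)ᴴ`: it is defined by this formula on a basis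
`γ i ∈ G`, and since traces are real it satisfies `tr (φ x hᴴ) = tr (h⁻¹ x)` for all `h ∈ G`. By
nondegeneracy of the trace form this identity determines `φ`, whence the equivariance. -/
lemma exists_twisted_map (G : Subgroup SL₂) (hirr : IsIrreducibleSubgroup G)
    (htr : ∀ g ∈ G, (trSL g).im = 0) :
    ∃ φ : M₂ →ₗ[ℂ] M₂, φ ≠ 0 ∧
      ∀ g ∈ G, ∀ x, φ ((g : M₂) * x) = ((g⁻¹ : SL₂) : M₂)ᴴ * φ x := by
  let b := Module.Basis.ofSpan (span_eq_top G hirr).ge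
  have hb : ∀ i, ∃ g ∈ G, b i = (g : M₂) := fun i =>
    Module.Basis.ofSpan_subset (span_eq_top G hirr).ge ⟨i, rfl⟩
  choose γ hγ hbγ using hb
  let φ : M₂ →ₗ[ℂ] M₂ := b.constr ℂ fun i => ((γ i)⁻¹ : SL₂).1ᴴ
  have star_tr : ∀ g ∈ G, star (trace (g : M₂)) = trace (g : M₂) := fun g hg =>
    Complex.conj_eq_iff_im.mpr (htr g hg)
  have hφ : ∀ h ∈ G, ∀ x, trace (φ x * (h : M₂)ᴴ) = trace (((h⁻¹ : SL₂) : M₂) * x) := by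
    intro h hh x
    let L : M₂ →ₗ[ℂ] ℂ :=
      Matrix.traceLinearMap (Fin 2) ℂ ℂ ∘ₗ LinearMap.mulRight ℂ ((h : M₂)ᴴ) ∘ₗ φ
    let R : M₂ →ₗ[ℂ] ℂ :=
      Matrix.traceLinearMap (Fin 2) ℂ ℂ ∘ₗ LinearMap.mulLeft ℂ ((h⁻¹ : SL₂) : M₂)
    have hLR : L = R := by
      refine b.ext fun i => ?_
      have hφb : φ (b i) = ((γ i)⁻¹ : SL₂).1ᴴ := b.constr_basis ℂ _ i
      have e1 : L (b i) = trace (φ (b i) * (h : M₂)ᴴ) := rfl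
      have e2 : R (b i) = trace (((h⁻¹ : SL₂) : M₂) * b i) := rfl
      rw [e1, e2, hφb, hbγ, ← conjTranspose_mul, trace_conjTranspose,
        ← SL_coe_mul, star_tr _ (G.mul_mem hh (G.inv_mem (hγ i))),
        ← SL_coe_mul]
      have := trSL_inv (h * (γ i)⁻¹)
      rw [_root_.mul_inv_rev, inv_inv] at this
      unfold trSL at this
      rw [← this, SL_coe_mul, trace_mul_comm, ← SL_coe_mul]
    exact LinearMap.congr_fun hLR x
  refine ⟨φ, fun h0 => ?_, fun g hg x => ?_⟩
  · have := hφ 1 G.one_mem 1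
    simp [h0] at this
  · rw [← sub_eq_zero, ← conjTranspose_eq_zero]
    apply eq_zero_of_trace_mul G hirr
    intro h hh
    have e1 := hφ h hh ((g : M₂) * x)
    have e2 := hφ (g⁻¹ * h) (G.mul_mem (G.inv_mem hg) hh) x
    rw [_root_.mul_inv_rev, inv_inv, SL_coe_mul, SL_coe_mul,
      mul_assoc, ← e1, conjTranspose_mul, ← mul_assoc, trace_mul_comm, ← mul_assoc] at e2
    rw [trace_mul_comm, ← conjTranspose_conjTranspose (h : M₂), ← conjTranspose_mul,
      trace_conjTranspose, sub_mul, trace_sub, e2, sub_self, star_zero]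

/-- For fixed `k` and `a`, the matrix whose `j`-th column is the `a`-th column of `φ (E_{jk})`
intertwines `g` with `(g⁻¹)ᴴ`, because left multiplication by `g` preserves the matrices supported
in column `k`. -/
lemma exists_invariant_form (G : Subgroup SL₂) (hirr : IsIrreducibleSubgroup G)
    (htr : ∀ g ∈ G, (trSL g).im = 0) :
    ∃ N : M₂, N ≠ 0 ∧ ∀ g ∈ G, (g : M₂)ᴴ * N * (g : M₂) = N := by
  obtain ⟨φ, hφ0, hφ⟩ := exists_twisted_map G hirr htr
  let N : Fin 2 → Fin 2 → M₂ := fun k a => Matrix.of fun i j => φ (Matrix.single j k 1) i a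
  have hN : ∃ k a, N k a ≠ 0 := by
    by_contra! h
    apply hφ0
    have hz : ∀ j k, φ (Matrix.single j k 1) = 0 := fun j k => by
      ext i a
      exact congrFun (congrFun (h k a) i) j
    apply Matrix.ext_linearMap
    intro j k
    ext1
    simpa using hz j k
  obtain ⟨k, a, hka⟩ := hN
  refine ⟨N k a, hka, fun g hg => ?_⟩
  have h1 : N k a * (g : M₂) = ((g⁻¹ : SL₂) : M₂)ᴴ * N k a := by
    ext i j
    have e := congrFun (congrFun (hφ g hg (Matrix.single j k 1)) i) a
    have e2 : (g : M₂) * Matrix.single j k 1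
        = g.1 0 j • Matrix.single 0 k (1 : ℂ) + g.1 1 j • Matrix.single 1 k (1 : ℂ) := by
      ext p q
      fin_cases p <;> simp [Matrix.mul_apply, Matrix.single_apply, Fin.sum_univ_two] <;>
        fin_cases j <;> simp
    rw [e2, map_add, map_smul, map_smul] at e
    simp only [Matrix.add_apply, Matrix.smul_apply, smul_eq_mul, mul_apply, Fin.sum_univ_two] at e
    simp only [mul_apply, Fin.sum_univ_two, N, of_apply]
    rw [← e]
    ring
  rw [mul_assoc, h1, ← mul_assoc, ← conjTranspose_mul, coe_inv_mul, conjTranspose_one, one_mul]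

/-- The kernel of an invariant form is a subrepresentation, so by irreducibility a nonzero
invariant form is nondegenerate. -/
lemma det_ne_zero_of_invariant (G : Subgroup SL₂) (hirr : IsIrreducibleSubgroup G) (H : M₂)
    (hH : H ≠ 0) (hinv : ∀ g ∈ G, (g : M₂)ᴴ * H * (g : M₂) = H) : H.det ≠ 0 := by
  intro hd
  obtain ⟨v, hv, hHv⟩ := Matrix.exists_mulVec_eq_zero_iff.mpr hd
  refine hirr ⟨v, hv, fun g hg => exists_smul_of_mulVec_eq_zero H hH v _ hv hHv ?_⟩
  have e : H * (g : M₂) = ((g⁻¹ : SL₂) : M₂)ᴴ * H := by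
    conv_rhs => rw [← hinv g hg]
    rw [← mul_assoc, ← mul_assoc, ← conjTranspose_mul, coe_mul_inv, conjTranspose_one, one_mul]
  rw [mulVec_mulVec, e, ← mulVec_mulVec, hHv, mulVec_zero]

lemma isUnitary_of_trace_real (G : Subgroup SL₂) (hirr : IsIrreducibleSubgroup G)
    (htr : ∀ g ∈ G, (trSL g).im = 0) : IsUnitarySubgroup G := by
  obtain ⟨N, hN, hinv⟩ := exists_invariant_form G hirr htr
  have hinv' : ∀ g ∈ G, (g : M₂)ᴴ * Nᴴ * (g : M₂) = Nᴴ := fun g hg => by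
    conv_rhs => rw [← hinv g hg]
    simp [conjTranspose_mul, mul_assoc]
  by_cases h : N + Nᴴ = 0
  · -- Here `N` is skew-Hermitian, so `i N` is Hermitian.
    have hs : Nᴴ = -N := (neg_eq_of_add_eq_zero_right h).symm
    have hi : ∀ g ∈ G, (g : M₂)ᴴ * (Complex.I • N) * (g : M₂) = Complex.I • N := fun g hg => by
      rw [mul_smul_comm, smul_mul_assoc, hinv g hg]
    refine ⟨Complex.I • N, ?_, ?_, hi⟩
    · rw [IsHermitian, conjTranspose_smul, hs]
      simp
    · exact det_ne_zero_of_invariant G hirr _ (smul_ne_zero Complex.I_ne_zero hN) hi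
  · have hi : ∀ g ∈ G, (g : M₂)ᴴ * (N + Nᴴ) * (g : M₂) = N + Nᴴ := fun g hg => by
      rw [mul_add, add_mul, hinv g hg, hinv' g hg]
    exact ⟨N + Nᴴ, isHermitian_add_transpose_self N, det_ne_zero_of_invariant G hirr _ h hi, hi⟩

/-! ### The equivalence -/

lemma trace_real_of_isUnitary (G : Subgroup SL₂) (hG : IsUnitarySubgroup G) (g : SL₂)
    (hg : g ∈ G) : (trSL g).im = 0 := by
  obtain ⟨H, -, hd, hinv⟩ := hG
  have hu : IsUnit H.det := isUnit_iff_ne_zero.mpr hd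
  have e : (g : M₂)ᴴ * H = H * ((g⁻¹ : SL₂) : M₂) := by
    conv_rhs => rw [← hinv g hg]
    rw [mul_assoc _ (g : M₂), coe_mul_inv, mul_one]
  have e2 : (g : M₂)ᴴ = H * ((g⁻¹ : SL₂) : M₂) * H⁻¹ := by
    rw [← e, mul_assoc, mul_nonsing_inv _ hu, mul_one]
  have e3 : star (trSL g) = trSL g := by
    conv_rhs => rw [← trSL_inv]
    rw [trSL, ← trace_conjTranspose, e2, trace_mul_comm, ← mul_assoc, nonsing_inv_mul _ hu,
      one_mul, trSL]
  exact Complex.conj_eq_iff_im.mp e3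

/-- An irreducible subgroup of `SL(2,ℂ)` generated by a set `S` is unitary iff, for all
`P, Q, R ∈ S`, the six pairwise traces are real and at least one of `tr(PQR)`, `tr(PRQ)`
is real. -/
theorem irreducible_unitary_iff_trace_conditions
    (G : Subgroup (Matrix.SpecialLinearGroup (Fin 2) ℂ))
    (S : Set (Matrix.SpecialLinearGroup (Fin 2) ℂ))
    (hS : Subgroup.closure S = G)
    (hirr : IsIrreducibleSubgroup G) :
    IsUnitarySubgroup G ↔
      ∀ P ∈ S, ∀ Q ∈ S, ∀ R ∈ S,
        (trSL P).im = 0 ∧ (trSL Q).im = 0 ∧ (trSL R).im = 0 ∧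
        (trSL (P * Q)).im = 0 ∧ (trSL (P * R)).im = 0 ∧ (trSL (Q * R)).im = 0 ∧
        ((trSL (P * Q * R)).im = 0 ∨ (trSL (P * R * Q)).im = 0) := by
  subst hS
  constructor
  · intro hU P hP Q hQ R hR
    have hr := trace_real_of_isUnitary _ hU
    have mP := Subgroup.subset_closure hP
    have mQ := Subgroup.subset_closure hQ
    have mR := Subgroup.subset_closure hR
    exact ⟨hr _ mP, hr _ mQ, hr _ mR, hr _ (mul_mem mP mQ), hr _ (mul_mem mP mR),
      hr _ (mul_mem mQ mR), Or.inl (hr _ (mul_mem (mul_mem mP mQ) mR))⟩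
  · intro h
    refine isUnitary_of_trace_real _ hirr (trace_real_of_conditions S
      (fun P hP => (h P hP P hP P hP).1) (fun P hP Q hQ => (h P hP Q hQ Q hQ).2.2.2.1) ?_)
    intro P hP Q hQ R hR
    obtain ⟨a1, a2, a3, a4, a5, a6, h7⟩ := h P hP Q hQ R hR
    refine h7.elim id fun h7 => ?_
    have e := congrArg Complex.im (trace_mul_mul_add (P : M₂) Q R)
    simp only [trSL, SL_coe_mul] at a1 a2 a3 a4 a5 a6 h7 ⊢
    simpa [Complex.mul_im, Complex.mul_re, a1, a2, a3, a4, a5, a6, h7] using e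
end
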